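/- In the quadratic setup with a > 2, let 0 < ℓ̂ ≤ ℓ and let u_*^ℓ and u_*^{ℓ̂} denote the payoff functions obtained from leeways ℓ and ℓ̂ respectively. Let F be any cumulative distribution function on [0,1] with strictly positive density. If complete pooling P = [0,1] is optimal for u_*^ℓ (i.e., ∫_0^1 u_*^ℓ(θ) dG_{[0,1]}(θ) ≥ ∫_0^1 u_*^ℓ(θ) dG_P(θ) for every open pooling set P), then complete pooling P = [0,1] is optimal for u_*^{ℓ̂}. -/

import Mathlib

open MeasureTheory Set
open scoped Classical

noncomputable section

/-- CDF associated with the density `f` (relevant on `[0,1]`): `F(x) = ∫_0^x f`. -/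
def cdfF (f : ℝ → ℝ) (x : ℝ) : ℝ := ∫ t in (0:ℝ)..x, f t

/-- Conditional mean `E_F[θ | (ξ,ζ)]` of `θ` on the interval `(ξ, ζ)` under density `f`. -/
def condMean (f : ℝ → ℝ) (ξ ζ : ℝ) : ℝ :=
  (∫ t in ξ..ζ, t * f t) / (∫ t in ξ..ζ, f t)

/-- `f` is a strictly positive density of a probability measure on `[0,1]`. -/
def IsDensity (f : ℝ → ℝ) : Prop :=
  (∀ θ ∈ Icc (0:ℝ) 1, 0 < f θ) ∧ IntegrableOn f (Icc (0:ℝ) 1) ∧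
    (∫ t in (0:ℝ)..1, f t) = 1

/-- An open pooling set: a relatively open subset of `[0,1]`. -/
def IsPoolingSet (P : Set ℝ) : Prop :=
  ∃ U : Set ℝ, IsOpen U ∧ P = U ∩ Icc (0:ℝ) 1

/-- Left endpoint `ξ_i` of the interval component of `θ` in `P`. -/
def compInf (P : Set ℝ) (θ : ℝ) : ℝ := sInf (connectedComponentIn P θ)

/-- Right endpoint `ζ_i` of the interval component of `θ` in `P`. -/
def compSup (P : Set ℝ) (θ : ℝ) : ℝ := sSup (connectedComponentIn P θ)

/-- The posterior-mean map induced by the pooling set `P`: states in a pooled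
interval are mapped to the conditional mean of that interval, other states to
themselves. -/
def poolMean (f : ℝ → ℝ) (P : Set ℝ) (θ : ℝ) : ℝ :=
  if θ ∈ P then condMean f (compInf P θ) (compSup P θ) else θ

/-- The induced distribution `G_P` of posterior means. -/
def Gp (f : ℝ → ℝ) (P : Set ℝ) (θ : ℝ) : ℝ :=
  if θ ∈ P then
    (if θ < condMean f (compInf P θ) (compSup P θ) then cdfF f (compInf P θ)
     else cdfF f (compSup P θ))
  else cdfF f θ

/-- `Γ_P(θ) = ∫_0^θ G_P(t) dt`. -/
def Gam (f : ℝ → ℝ) (P : Set ℝ) (θ : ℝ) : ℝ := ∫ t in (0:ℝ)..θ, Gp f P t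

/-- The value `∫_0^1 u(θ) dG_P(θ)` of the pooling set `P` under payoff `u`,
written as the expectation of `u` composed with the posterior-mean map. -/
def poolValue (f : ℝ → ℝ) (u : ℝ → ℝ) (P : Set ℝ) : ℝ :=
  ∫ θ in (0:ℝ)..1, u (poolMean f P θ) * f θ

/-- `P` is an optimal pooling set for `u`. -/
def IsOptimal (f : ℝ → ℝ) (u : ℝ → ℝ) (P : Set ℝ) : Prop :=
  IsPoolingSet P ∧ ∀ Q : Set ℝ, IsPoolingSet Q → poolValue f u Q ≤ poolValue f u P

/-- Receiver's preferred decision in the quadratic setup. -/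
def rhoR (a b θ : ℝ) : ℝ := a * θ + b

/-- Second-best decision in the quadratic setup with leeway `ℓ`. -/
def rhoStar (a b ℓ θ : ℝ) : ℝ :=
  if ℓ < θ - rhoR a b θ then rhoR a b θ + ℓ
  else if θ - rhoR a b θ < -ℓ then rhoR a b θ - ℓ
  else θ

/-- Joint payoff under the second-best decision in the quadratic setup. -/
def uStar (a b ℓ θ : ℝ) : ℝ := θ * rhoStar a b ℓ θ - (rhoStar a b ℓ θ) ^ 2 / 2


lemma uStar_eq (a b l x : ℝ) (hl : 0 < l) :
    uStar a b l x = x ^ 2 / 2 - (max (|x - (a * x + b)| - l) 0) ^ 2 / 2 := by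
  unfold uStar rhoStar rhoR
  split_ifs with h1 h2
  · rw [abs_of_pos (by linarith), max_eq_left (by linarith)]; ring
  · rw [abs_of_neg (by linarith), max_eq_left (by linarith)]; ring
  · rw [max_eq_right]
    · ring
    · have : |x - (a * x + b)| ≤ l := abs_le.2 ⟨by linarith, by linarith⟩
      linarith

lemma uStar_continuous (a b l : ℝ) (hl : 0 < l) : Continuous (uStar a b l) := by
  have : uStar a b l = fun x => x ^ 2 / 2 - (max (|x - (a * x + b)| - l) 0) ^ 2 / 2 := by
    funext x; exact uStar_eq a b l x hl
  rw [this]; fun_prop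

lemma G_lower (p q s t : ℝ) (hs : 0 ≤ s) (hsq : s ≤ q - p) :
    2 * s * (t - p) - s ^ 2 ≤ (max (t - p) 0) ^ 2 - (max (t - q) 0) ^ 2 := by
  rcases le_total (t - p) 0 with h1 | h1 <;> rcases le_total (t - q) 0 with h2 | h2
  · rw [max_eq_right h1, max_eq_right h2]; nlinarith
  · rw [max_eq_right h1, max_eq_left h2]; nlinarith
  · rw [max_eq_left h1, max_eq_right h2]; nlinarith [sq_nonneg (t - p - s)]
  · rw [max_eq_left h1, max_eq_left h2]
    nlinarith [mul_nonneg (sub_nonneg.2 hsq) h2, sq_nonneg (q - p - s)]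

lemma G_attain (p q t : ℝ) (hpq : p ≤ q) : ∃ s, 0 ≤ s ∧ s ≤ q - p ∧ (t ≤ p → s = 0) ∧
    (max (t - p) 0) ^ 2 - (max (t - q) 0) ^ 2 = 2 * s * (t - p) - s ^ 2 := by
  rcases le_total (t - p) 0 with h1 | h1 
  · refine ⟨0, le_rfl, by linarith, fun _ => rfl, ?_⟩
    rw [max_eq_right h1, max_eq_right (by linarith)]; ring
  rcases le_total (t - q) 0 with h2 | h2
  · refine ⟨t - p, h1, by linarith, fun _ => by linarith, ?_⟩
    rw [max_eq_left h1, max_eq_right h2]; ring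
  · refine ⟨q - p, by linarith, by linarith, fun _ => by linarith, ?_⟩
    rw [max_eq_left h1, max_eq_left h2]; ring

lemma G_subgrad (p q e : ℝ) (hpq : p ≤ q) : ∃ s, ∀ d,
    (max (|e| - p) 0) ^ 2 - (max (|e| - q) 0) ^ 2 + s * (d - e) ≤
      (max (|d| - p) 0) ^ 2 - (max (|d| - q) 0) ^ 2 := by
  obtain ⟨s, h0, h1, -, h3⟩ := G_attain p q |e| hpq
  rcases le_total 0 e with he | he
  · refine ⟨2 * s, fun d => ?_⟩
    have := G_lower p q s |d| h0 h1
    rw [h3, abs_of_nonneg he]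
    nlinarith [mul_nonneg h0 (sub_nonneg.2 (le_abs_self d))]
  · refine ⟨-(2 * s), fun d => ?_⟩
    have := G_lower p q s |d| h0 h1
    rw [h3, abs_of_nonpos he]
    nlinarith [mul_nonneg h0 (sub_nonneg.2 (neg_le_abs d))]

lemma uStar_subgrad (a b ℓ ℓh y : ℝ) (hℓh : 0 < ℓh) (hle : ℓh ≤ ℓ) : ∃ s, ∀ x,
    uStar a b ℓh x ≤ uStar a b ℓ x + (uStar a b ℓh y - uStar a b ℓ y) + s * (x - y) := by
  obtain ⟨s, hs⟩ := G_subgrad ℓh ℓ (y - (a * y + b)) hle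
  refine ⟨-(s * (1 - a) / 2), fun x => ?_⟩
  have := hs (x - (a * x + b))
  simp only [uStar_eq a b ℓh _ hℓh, uStar_eq a b ℓ _ (hℓh.trans_le hle)]
  nlinarith

/-- Facts on a component of a pooling set. -/
lemma comp_interior {P : Set ℝ} (hP : IsPoolingSet P) {x : ℝ} (hx : x ∈ P) :
    (interior (connectedComponentIn P x)).Nonempty := by
  obtain ⟨U, hU, rfl⟩ := hP
  obtain ⟨ε, hε, hb⟩ := Metric.isOpen_iff.1 hU x hx.1
  have hx01 := hx.2
  have hsub : Ioo (x - ε) (x + ε) ∩ Icc 0 1 ⊆ connectedComponentIn (U ∩ Icc 0 1) x := by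
    apply IsPreconnected.subset_connectedComponentIn
    · exact (ordConnected_Ioo.inter ordConnected_Icc).isPreconnected
    · exact ⟨⟨by linarith, by linarith⟩, hx01⟩
    · rw [← Real.ball_eq_Ioo]
      exact inter_subset_inter_left _ hb
  have hsub2 : Ioo (max (x - ε) 0) (min (x + ε) 1) ⊆ connectedComponentIn (U ∩ Icc 0 1) x := by
    refine Subset.trans ?_ hsub
    rintro z ⟨h1, h2⟩
    rw [max_lt_iff] at h1
    rw [lt_min_iff] at h2
    exact ⟨⟨h1.1, h2.1⟩, h1.2.le, h2.2.le⟩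
  refine Nonempty.mono (interior_maximal hsub2 isOpen_Ioo) ?_
  rw [nonempty_Ioo, max_lt_iff, lt_min_iff, lt_min_iff]
  obtain ⟨h0, h1⟩ := hx01
  exact ⟨⟨by linarith, by linarith⟩, by linarith, by norm_num⟩

lemma ae_eq_Ioc {C : Set ℝ} (hC : C.OrdConnected) (hC1 : C ⊆ Icc 0 1) (hne : C.Nonempty) :
    C =ᵐ[volume] Ioc (sInf C) (sSup C) := by
  have hbb : BddBelow C := bddBelow_Icc.mono hC1
  have hba : BddAbove C := bddAbove_Icc.mono hC1
  have h1 : C ⊆ Icc (sInf C) (sSup C) := fun z hz => ⟨csInf_le hbb hz, le_csSup hba hz⟩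
  have h2 : Ioo (sInf C) (sSup C) ⊆ C := by
    rintro z ⟨hz1, hz2⟩
    obtain ⟨u, hu, huz⟩ := exists_lt_of_csInf_lt hne hz1
    obtain ⟨v, hv, hvz⟩ := exists_lt_of_lt_csSup hne hz2
    exact hC.out hu hv ⟨huz.le, hvz.le⟩
  refine Filter.EventuallyLE.antisymm ?_ ?_
  · exact h1.eventuallyLE.trans Ioc_ae_eq_Icc.symm.le
  · exact Ioo_ae_eq_Ioc.symm.le.trans h2.eventuallyLE

lemma comp_facts {P : Set ℝ} (hP : IsPoolingSet P) {x : ℝ} (hx : x ∈ P) :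
    0 ≤ compInf P x ∧ compInf P x < compSup P x ∧ compSup P x ≤ 1 ∧
    MeasurableSet (connectedComponentIn P x) ∧
    connectedComponentIn P x =ᵐ[volume] Ioc (compInf P x) (compSup P x) := by
  have hsub : connectedComponentIn P x ⊆ Icc 0 1 := by
    obtain ⟨U, hU, rfl⟩ := hP
    exact (connectedComponentIn_subset _ _).trans inter_subset_right
  have hne : (connectedComponentIn P x).Nonempty := ⟨x, mem_connectedComponentIn hx⟩
  have hoc : (connectedComponentIn P x).OrdConnected :=
    isPreconnected_connectedComponentIn.ordConnected
  have hae := ae_eq_Ioc hoc hsub hne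
  refine ⟨le_csInf hne fun z hz => (hsub hz).1, ?_, csSup_le hne fun z hz => (hsub hz).2,
    hoc.measurableSet, hae⟩
  by_contra hcon
  have hemp : Ioc (sInf (connectedComponentIn P x)) (sSup (connectedComponentIn P x)) = ∅ :=
    Ioc_eq_empty hcon
  have h0 : volume (connectedComponentIn P x) = 0 := by
    rw [measure_congr hae, hemp, measure_empty]
  have := isOpen_interior.measure_pos volume (comp_interior hP hx)
  exact absurd (measure_mono_null interior_subset h0) this.ne'

lemma condMean_facts {f : ℝ → ℝ} (hf : IsDensity f) {p q : ℝ} (h0 : 0 ≤ p) (h : p < q)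
    (h1 : q ≤ 1) : condMean f p q ∈ Icc (0:ℝ) 1 ∧
    condMean f p q * (∫ t in p..q, f t) = ∫ t in p..q, t * f t := by
  obtain ⟨hpos, hint, -⟩ := hf
  have hi : IntervalIntegrable f volume p q := by
    rw [intervalIntegrable_iff_integrableOn_Icc_of_le h.le]
    exact hint.mono_set (Icc_subset_Icc h0 h1)
  have hti : IntervalIntegrable (fun t => t * f t) volume p q :=
    hi.continuousOn_mul continuousOn_id
  have hI : 0 < ∫ t in p..q, f t :=
    intervalIntegral.intervalIntegral_pos_of_pos_on hi
      (fun z hz => hpos z ⟨by linarith [hz.1], by linarith [hz.2]⟩) h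
  have hp : ∀ z ∈ Icc p q, 0 < f z := fun z hz => hpos z ⟨by linarith [hz.1], by linarith [hz.2]⟩
  refine ⟨⟨div_nonneg ?_ hI.le, ?_⟩, div_mul_cancel₀ _ hI.ne'⟩
  · exact intervalIntegral.integral_nonneg h.le fun z hz =>
      mul_nonneg (by linarith [hz.1]) (hp z hz).le
  · rw [condMean, div_le_one hI]
    refine intervalIntegral.integral_mono_on h.le hti hi fun z hz => ?_
    nlinarith [hp z hz, hz.2]

lemma poolMean_mem {f : ℝ → ℝ} (hf : IsDensity f) {P : Set ℝ} (hP : IsPoolingSet P) {x : ℝ}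
    (hx : x ∈ Icc (0:ℝ) 1) : poolMean f P x ∈ Icc (0:ℝ) 1 := by
  unfold poolMean
  split_ifs with h
  · obtain ⟨h0, h1, h2, -, -⟩ := comp_facts hP h
    exact (condMean_facts hf h0 h1 h2).1
  · exact hx

lemma poolMean_on_comp {f : ℝ → ℝ} {P : Set ℝ} {x z : ℝ}
    (hz : z ∈ connectedComponentIn P x) :
    poolMean f P z = condMean f (compInf P x) (compSup P x) := by
  have hzP := connectedComponentIn_subset _ _ hz
  rw [poolMean, if_pos hzP, compInf, compSup, ← connectedComponentIn_eq hz]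
  rfl

/-- The set of components. -/
def compsOf (P : Set ℝ) : Set (Set ℝ) := Set.image (fun x => connectedComponentIn P x) P

lemma compsOf_disj (P : Set ℝ) : (compsOf P).PairwiseDisjoint id := by
  rintro _ ⟨x, hx, rfl⟩ _ ⟨y, hy, rfl⟩ hne
  refine Set.disjoint_left.2 fun z hz1 hz2 => hne ?_
  exact (connectedComponentIn_eq hz1).trans (connectedComponentIn_eq hz2).symm

lemma compsOf_countable {P : Set ℝ} (hP : IsPoolingSet P) : (compsOf P).Countable := by
  refine (compsOf_disj P).countable_of_nonempty_interior ?_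
  rintro _ ⟨x, hx, rfl⟩
  exact comp_interior hP hx

lemma compsOf_union (P : Set ℝ) : P = ⋃ c : compsOf P, (c : Set ℝ) := by
  ext z
  simp only [mem_iUnion]
  constructor
  · intro hz
    exact ⟨⟨_, z, hz, rfl⟩, mem_connectedComponentIn hz⟩
  · rintro ⟨⟨_, x, hx, rfl⟩, hz⟩
    exact connectedComponentIn_subset _ _ hz

lemma pool_measurableSet {P : Set ℝ} (hP : IsPoolingSet P) : MeasurableSet P := by
  obtain ⟨U, hU, rfl⟩ := hP
  exact hU.measurableSet.inter measurableSet_Icc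

lemma pool_sub {P : Set ℝ} (hP : IsPoolingSet P) : P ⊆ Icc 0 1 := by
  obtain ⟨U, hU, rfl⟩ := hP
  exact inter_subset_right

lemma poolMean_aesm (f : ℝ → ℝ) {P : Set ℝ} (hP : IsPoolingSet P) :
    AEStronglyMeasurable (poolMean f P) (volume.restrict (Icc (0:ℝ) 1)) := by
  have hc := (compsOf_countable hP).to_subtype
  have hIcc : Icc (0:ℝ) 1 = P ∪ (Icc 0 1 \ P) := (union_sdiff_cancel (pool_sub hP)).symm
  rw [hIcc, aestronglyMeasurable_union_iff]
  constructor
  · rw [show volume.restrict P = volume.restrict (⋃ c : compsOf P, (c : Set ℝ)) by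
      rw [← compsOf_union P], aestronglyMeasurable_iUnion_iff]
    rintro ⟨_, x, hx, rfl⟩
    refine (aestronglyMeasurable_const
      (b := condMean f (compInf P x) (compSup P x))).congr ?_
    filter_upwards [ae_restrict_mem (comp_facts hP hx).2.2.2.1] with z hz
    exact (poolMean_on_comp hz).symm
  · refine (aestronglyMeasurable_id).congr ?_
    filter_upwards [ae_restrict_mem (measurableSet_Icc.diff (pool_measurableSet hP))] with z hz
    simp [poolMean, hz.2]

lemma comp_integrable {f : ℝ → ℝ} (hf : IsDensity f) {P : Set ℝ} (hP : IsPoolingSet P)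
    {u : ℝ → ℝ} (hu : Continuous u) :
    IntegrableOn (fun θ => u (poolMean f P θ) * f θ) (Icc (0:ℝ) 1) := by
  obtain ⟨C, hC⟩ := (isCompact_Icc (a := (0:ℝ)) (b := 1)).exists_bound_of_continuousOn
    hu.continuousOn
  refine Integrable.bdd_mul (c := C) hf.2.1 (hu.comp_aestronglyMeasurable (poolMean_aesm f hP)) ?_
  filter_upwards [ae_restrict_mem measurableSet_Icc] with z hz
  exact hC _ (poolMean_mem hf hP hz)

lemma pool_mean_preserving {f : ℝ → ℝ} (hf : IsDensity f) {P : Set ℝ} (hP : IsPoolingSet P) :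
    ∫ θ in Icc (0:ℝ) 1, poolMean f P θ * f θ = ∫ θ in Icc (0:ℝ) 1, θ * f θ := by
  have hc := (compsOf_countable hP).to_subtype
  have hi1 : IntegrableOn (fun θ => poolMean f P θ * f θ) (Icc (0:ℝ) 1) :=
    comp_integrable hf hP continuous_id
  have hi2 : IntegrableOn (fun θ => θ * f θ) (Icc (0:ℝ) 1) :=
    hf.2.1.continuousOn_mul continuousOn_id isCompact_Icc
  have hm := pool_measurableSet hP
  have hs := pool_sub hP
  rw [← integral_inter_add_sdiff hm hi1, ← integral_inter_add_sdiff hm hi2,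
    inter_eq_self_of_subset_right hs]
  congr 1
  · have hmeas : ∀ c : compsOf P, MeasurableSet (c : Set ℝ) := by
      rintro ⟨_, x, hx, rfl⟩
      exact (comp_facts hP hx).2.2.2.1
    have hd : Pairwise (Function.onFun Disjoint fun c : compsOf P => (c : Set ℝ)) := by
      intro c d hcd
      exact compsOf_disj P c.2 d.2 (fun h => hcd (Subtype.ext h))
    have key : ∀ g : ℝ → ℝ, IntegrableOn g P →
        ∫ θ in P, g θ = ∑' c : compsOf P, ∫ θ in (c : Set ℝ), g θ := by
      intro g hg
      rw [← integral_iUnion hmeas hd (by rwa [← compsOf_union P]), ← compsOf_union P]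
    rw [key _ (hi1.mono_set hs), key _ (hi2.mono_set hs)]
    congr 1
    funext ⟨_, x, hx, rfl⟩
    obtain ⟨h0, h1, h2, h3, h4⟩ := comp_facts hP hx
    have e1 : ∫ θ in connectedComponentIn P x, poolMean f P θ * f θ =
        ∫ θ in connectedComponentIn P x, condMean f (compInf P x) (compSup P x) * f θ :=
      setIntegral_congr_fun h3 fun z hz => by
        simp only [poolMean_on_comp hz]
    simp only
    rw [e1, integral_const_mul, setIntegral_congr_set h4, setIntegral_congr_set h4,
      ← intervalIntegral.integral_of_le h1.le, ← intervalIntegral.integral_of_le h1.le]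
    exact (condMean_facts hf h0 h1 h2).2
  · refine setIntegral_congr_fun (measurableSet_Icc.diff hm) fun z hz => ?_
    simp [poolMean, hz.2]

lemma poolValue_eq (f u : ℝ → ℝ) (P : Set ℝ) :
    poolValue f u P = ∫ θ in Icc (0:ℝ) 1, u (poolMean f P θ) * f θ := by
  rw [poolValue, intervalIntegral.integral_of_le zero_le_one, integral_Icc_eq_integral_Ioc]

lemma total_mass {f : ℝ → ℝ} (hf : IsDensity f) : ∫ θ in Icc (0:ℝ) 1, f θ = 1 := by
  rw [integral_Icc_eq_integral_Ioc, ← intervalIntegral.integral_of_le zero_le_one, hf.2.2]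

lemma poolValue_full {f : ℝ → ℝ} (hf : IsDensity f) (u : ℝ → ℝ) :
    poolValue f u (Icc 0 1) = u (∫ θ in Icc (0:ℝ) 1, θ * f θ) := by
  have hcm : condMean f 0 1 = ∫ θ in Icc (0:ℝ) 1, θ * f θ := by
    rw [condMean, hf.2.2, div_one, integral_Icc_eq_integral_Ioc,
      intervalIntegral.integral_of_le zero_le_one]
  have e1 : ∀ z ∈ Icc (0:ℝ) 1, poolMean f (Icc 0 1) z = ∫ θ in Icc (0:ℝ) 1, θ * f θ := by
    intro z hz
    rw [poolMean, if_pos hz, compInf, compSup,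
      isPreconnected_Icc.connectedComponentIn hz, csInf_Icc zero_le_one, csSup_Icc zero_le_one, hcm]
  rw [poolValue_eq, setIntegral_congr_fun (g := fun θ => u (∫ θ in Icc (0:ℝ) 1, θ * f θ) * f θ)
    measurableSet_Icc (fun z hz => by simp only [e1 z hz]), integral_const_mul, total_mass hf, mul_one]

/-- in the quadratic setup with a highly responsive receiver
(`a > 2`), if complete pooling `[0,1]` is optimal for the payoff `u_*` with
leeway `ℓ`, then complete pooling is optimal for the payoff with any smaller
leeway `0 < ℓ̂ ≤ ℓ`. -/
theorem complete_pooling_monotone_in_leeway (a b : ℝ) (ha : 2 < a)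
    (ℓ ℓh : ℝ) (hℓh : 0 < ℓh) (hle : ℓh ≤ ℓ)
    (f : ℝ → ℝ) (hf : IsDensity f)
    (hopt : IsOptimal f (uStar a b ℓ) (Icc (0:ℝ) 1)) :
    IsOptimal f (uStar a b ℓh) (Icc (0:ℝ) 1) := by
  refine ⟨hopt.1, fun Q hQ => ?_⟩
  have hq := hopt.2 Q hQ
  rw [poolValue_full hf] at hq ⊢
  have hmp := pool_mean_preserving hf hQ
  set m := ∫ θ in Icc (0:ℝ) 1, θ * f θ with hm
  obtain ⟨s, hs⟩ := uStar_subgrad a b ℓ ℓh m hℓh hle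
  have i1 := comp_integrable hf hQ (uStar_continuous a b ℓh hℓh)
  have i2 := comp_integrable hf hQ (uStar_continuous a b ℓ (hℓh.trans_le hle))
  have i3 : IntegrableOn (fun θ => poolMean f Q θ * f θ) (Icc (0:ℝ) 1) :=
    comp_integrable hf hQ continuous_id
  have i4 := hf.2.1
  rw [poolValue_eq] at hq ⊢
  set k := uStar a b ℓh m - uStar a b ℓ m with hk
  have hmono : ∫ θ in Icc (0:ℝ) 1, uStar a b ℓh (poolMean f Q θ) * f θ ≤
      ∫ θ in Icc (0:ℝ) 1, (uStar a b ℓ (poolMean f Q θ) * f θ + s * (poolMean f Q θ * f θ)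
        + (k - s * m) * f θ) := by
    refine setIntegral_mono_on i1 ((i2.add (i3.const_mul s)).add (i4.const_mul _))
      measurableSet_Icc fun z hz => ?_
    have h1 := mul_le_mul_of_nonneg_right (hs (poolMean f Q z)) (hf.1 z hz).le
    linarith
  have e : ∫ θ in Icc (0:ℝ) 1, (uStar a b ℓ (poolMean f Q θ) * f θ + s * (poolMean f Q θ * f θ)
        + (k - s * m) * f θ) =
      (∫ θ in Icc (0:ℝ) 1, uStar a b ℓ (poolMean f Q θ) * f θ) + s * m + (k - s * m) := by
    have i23 : IntegrableOn (fun θ => uStar a b ℓ (poolMean f Q θ) * f θ +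
        s * (poolMean f Q θ * f θ)) (Icc (0:ℝ) 1) := i2.add (i3.const_mul s)
    rw [integral_add i23 (i4.const_mul _),
      integral_add i2 (i3.const_mul s), integral_const_mul, integral_const_mul, hmp,
      total_mass hf, mul_one]
  rw [e] at hmono
  linarith
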